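/- arXiv:2003.12029 — 2 statements merged into one kernel-verified Lean document; each statement's English description precedes it below -/
import Mathlib

section
/- Let G be a connected graph with at least one edge (non-trivial). Then G has a flexible labeling if and only if G has a NAC-coloring. -/
open SimpleGraph Real

/-- The Euclidean plane. -/
abbrev Plane : Type := EuclideanSpace ℝ (Fin 2)

variable {V : Type*}

/-- A placement of a graph in the plane: endpoints of edges do not coincide. -/
def IsPlacement (G : SimpleGraph V) (p : V → Plane) : Prop :=
  ∀ ⦃u v : V⦄, G.Adj u v → p u ≠ p v

/-- Two placements are equivalent as frameworks on `G` if corresponding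
edge lengths agree. -/
def FrameworkEquiv (G : SimpleGraph V) (p q : V → Plane) : Prop :=
  ∀ ⦃u v : V⦄, G.Adj u v → dist (p u) (p v) = dist (q u) (q v)

/-- Two placements are congruent if all pairwise distances agree. -/
def PCongruent (p q : V → Plane) : Prop :=
  ∀ u v : V, dist (p u) (p v) = dist (q u) (q v)

/-- A flex of the framework `(G, p)`: a continuous path of placements on `[0,1]`
starting at `p`, each equivalent to `(G, p)`. -/
def IsFlex (G : SimpleGraph V) (p : V → Plane) (f : ℝ → V → Plane) : Prop :=
  ContinuousOn f (Set.Icc 0 1) ∧ f 0 = p ∧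
    ∀ t ∈ Set.Icc (0 : ℝ) 1, IsPlacement G (f t) ∧ FrameworkEquiv G p (f t)

/-- A flex is trivial if every placement along it is congruent to the initial one. -/
def IsTrivialFlex (p : V → Plane) (f : ℝ → V → Plane) : Prop :=
  ∀ t ∈ Set.Icc (0 : ℝ) 1, PCongruent (f t) p

/-- The placement `p` induces the labeling `lam`. -/
def Induces (G : SimpleGraph V) (p : V → Plane) (lam : Sym2 V → ℝ) : Prop :=
  ∀ ⦃u v : V⦄, G.Adj u v → dist (p u) (p v) = lam s(u, v)

/-- A labeling (positive on the edges) is flexible if some framework inducing it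
has a non-trivial flex. -/
def IsFlexibleLabeling (G : SimpleGraph V) (lam : Sym2 V → ℝ) : Prop :=
  (∀ e ∈ G.edgeSet, 0 < lam e) ∧
    ∃ p : V → Plane, Induces G p lam ∧ ∃ f, IsFlex G p f ∧ ¬ IsTrivialFlex p f

/-- A labeling is a proper flexible labeling if some framework inducing it has a
non-trivial flex in which all but finitely many placements are injective. -/
def IsProperFlexibleLabeling (G : SimpleGraph V) (lam : Sym2 V → ℝ) : Prop :=
  (∀ e ∈ G.edgeSet, 0 < lam e) ∧
    ∃ p : V → Plane, Induces G p lam ∧ ∃ f, IsFlex G p f ∧ ¬ IsTrivialFlex p f ∧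
      {t ∈ Set.Icc (0 : ℝ) 1 | ¬ Function.Injective (f t)}.Finite

/-- A graph is movable if it has a proper flexible labeling. -/
def Movable (G : SimpleGraph V) : Prop :=
  ∃ lam : Sym2 V → ℝ, IsProperFlexibleLabeling G lam

/-- A NAC-coloring: a surjective 2-coloring (`true` = red, `false` = blue) of the
edges such that every cycle is either monochromatic or contains at least two
edges of each color. -/
def IsNACColoring (G : SimpleGraph V) (δ : Sym2 V → Bool) : Prop :=
  (∃ e ∈ G.edgeSet, δ e = true) ∧ (∃ e ∈ G.edgeSet, δ e = false) ∧
    ∀ ⦃v : V⦄ (c : G.Walk v v), c.IsCycle →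
      (∀ e ∈ c.edges, δ e = true) ∨ (∀ e ∈ c.edges, δ e = false) ∨
        (2 ≤ (c.edges.filter (fun e => δ e)).length ∧
          2 ≤ (c.edges.filter (fun e => !(δ e))).length)

/-!
A motion in `ℂ` can be divided by the vector of one of its edges, so that this edge stays equal to
`1`. If the motion is nontrivial, the vector of some other edge then takes infinitely many values,
so it becomes transcendental over `ℂ` in a suitable ultrapower of `ℂ`, where some valuation trivial
on `ℂ` makes it less than one. For every edge the product of its vector and the conjugate vector is
a nonzero constant, so these two have inverse valuations. Hence coloring an edge red when its vector
has valuation less than one gives a NAC-coloring: by the ultrametric inequality, applied to the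
vectors along a red path and to the conjugate vectors along a blue path, no path of one color joins
the ends of an edge of the other.

Conversely, given a NAC-coloring, place each vertex on a grid, its column being its red component
and its row its blue component. Then red edges are parallel to one axis of the grid and blue edges
to the other, so all edge lengths are kept when the angle between the axes varies.
-/

open Filter
open scoped ComplexConjugate

section NACColoring

lemma monochromatic_or_two_le_iff_not_existsUnique {α : Type*} {l : List α} (hl : l.Nodup)
    (hlen : 2 ≤ l.length) (δ : α → Bool) :
    ((∀ e ∈ l, δ e = true) ∨ (∀ e ∈ l, δ e = false) ∨
      (2 ≤ (l.filter (fun e => δ e)).length ∧ 2 ≤ (l.filter (fun e => !(δ e))).length)) ↔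
      ∀ b, ¬ ∃! e, e ∈ l ∧ δ e = b := by
  classical
  have hunique : ∀ p : α → Bool, (∃! e, e ∈ l ∧ p e = true) ↔ (l.filter p).length = 1 := by
    intro p
    rw [← List.toFinset_card_of_nodup (hl.filter p), Finset.card_eq_one_iff_existsUnique]
    simp only [List.mem_toFinset, List.mem_filter]
  have htrue : (∀ e ∈ l, δ e = true) ↔ (l.filter (fun e => !(δ e))).length = 0 := by simp
  have hfalse : (∀ e ∈ l, δ e = false) ↔ (l.filter (fun e => δ e)).length = 0 := by simp
  have hutrue := hunique (fun e => δ e)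
  have hufalse := hunique (fun e => !(δ e))
  simp only [Bool.not_eq_true'] at hufalse
  rw [Bool.forall_bool, hutrue, hufalse, htrue, hfalse]
  have hsum : l.length = (l.filter (fun e => δ e)).length + (l.filter (fun e => !(δ e))).length :=
    l.length_eq_length_filter_add δ
  clear hunique htrue hfalse hutrue hufalse
  omega

lemma reachable_deleteEdges_iff_exists_isCycle {G : SimpleGraph V} {S : Set (Sym2 V)} {u v : V}
    (huv : G.Adj u v) (hS : s(u, v) ∈ S) :
    (G.deleteEdges S).Reachable u v ↔
      ∃ (w : V) (c : G.Walk w w), c.IsCycle ∧ s(u, v) ∈ c.edges ∧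
        ∀ e ∈ c.edges, e ∈ S → e = s(u, v) := by
  set H := G.deleteEdges (S \ {s(u, v)}) with hH
  have hHG : H ≤ G := G.deleteEdges_le _
  have hHS : H.deleteEdges {s(u, v)} = G.deleteEdges S := by
    rw [hH, deleteEdges_deleteEdges, Set.sdiff_union_of_subset (Set.singleton_subset_iff.2 hS)]
  have hHuv : H.Adj u v := by simp [hH, huv]
  have hbridge := adj_and_reachable_delete_edges_iff_exists_cycle (G := H) (v := u) (w := v)
  rw [hHS, and_iff_right hHuv] at hbridge
  rw [hbridge]
  constructor
  · rintro ⟨w, c, hc, hmem⟩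
    refine ⟨w, c.mapLe hHG, hc.mapLe hHG, by rwa [Walk.edges_mapLe_eq_edges], fun e he heS => ?_⟩
    rw [Walk.edges_mapLe_eq_edges] at he
    have heH := c.edges_subset_edgeSet he
    rw [hH, edgeSet_deleteEdges] at heH
    by_contra hne
    exact heH.2 ⟨heS, hne⟩
  · rintro ⟨w, c, hc, hmem, honly⟩
    have hcH : ∀ e ∈ c.edges, e ∈ H.edgeSet := by
      intro e he
      rw [hH, edgeSet_deleteEdges]
      exact ⟨c.edges_subset_edgeSet he, fun h => h.2 (honly e he h.1)⟩
    exact ⟨w, c.transfer H hcH, hc.transfer hcH, by rwa [Walk.edges_transfer]⟩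

theorem isNACColoring_iff_not_reachable {G : SimpleGraph V} {δ : Sym2 V → Bool} :
    IsNACColoring G δ ↔ (∃ e ∈ G.edgeSet, δ e = true) ∧ (∃ e ∈ G.edgeSet, δ e = false) ∧
      ∀ ⦃u v⦄, G.Adj u v → ¬ (G.deleteEdges (δ ⁻¹' {δ s(u, v)})).Reachable u v := by
  refine and_congr_right fun _ => and_congr_right fun _ => ?_
  have hcycle : ∀ {w} {c : G.Walk w w}, c.IsCycle → _ := fun {_ c} hc =>
    monochromatic_or_two_le_iff_not_existsUnique hc.edges_nodup
      (by rw [Walk.length_edges]; exact Nat.le_of_succ_le hc.three_le_length) δ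
  have hiff : ∀ {u v}, (huv : G.Adj u v) → _ := fun {u v} huv =>
    reachable_deleteEdges_iff_exists_isCycle huv (S := δ ⁻¹' {δ s(u, v)}) rfl
  constructor
  · intro hδ u v huv hreach
    obtain ⟨w, c, hc, hmem, honly⟩ := (hiff huv).1 hreach
    exact (hcycle hc).1 (hδ c hc) _ ⟨s(u, v), ⟨hmem, rfl⟩, fun e he => honly e he.1 he.2⟩
  · intro hδ w c hc
    rw [hcycle hc]
    rintro b ⟨⟨u, v⟩, ⟨hmem, rfl⟩, honly⟩
    have huv : G.Adj u v := c.edges_subset_edgeSet hmem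
    exact hδ huv ((hiff huv).2 ⟨w, c, hc, hmem, fun e he heδ => honly e ⟨he, heδ⟩⟩)

end NACColoring

section Motion

/-- A nontrivial motion of `G` in a metric space: a continuous family of maps on the vertices that
keeps the ends of every edge distinct and at constant distance, but changes some distance. It is a
nontrivial flex with a parameter space `T` other than `[0, 1]` allowed and no initial placement
singled out. -/
structure IsNontrivialMotion {T X : Type*} [TopologicalSpace T] [MetricSpace X]
    (G : SimpleGraph V) (z : T → V → X) : Prop where
  continuous : Continuous z
  ne_of_adj : ∀ t ⦃u v⦄, G.Adj u v → z t u ≠ z t v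
  dist_eq_of_adj : ∀ s t ⦃u v⦄, G.Adj u v → dist (z s u) (z s v) = dist (z t u) (z t v)
  exists_dist_ne : ∃ s t u v, dist (z s u) (z s v) ≠ dist (z t u) (z t v)

namespace IsNontrivialMotion

variable {T X Y : Type*} [TopologicalSpace T] [MetricSpace X] [MetricSpace Y] {G : SimpleGraph V}

lemma continuous_apply {z : T → V → X} (hz : IsNontrivialMotion G z) (v : V) :
    Continuous fun t => z t v :=
  (_root_.continuous_apply v).comp hz.continuous

lemma isometry_comp {z : T → V → X} (hz : IsNontrivialMotion G z) {φ : X → Y} (hφ : Isometry φ) :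
    IsNontrivialMotion G fun t v => φ (z t v) where
  continuous := continuous_pi fun v => hφ.continuous.comp (hz.continuous_apply v)
  ne_of_adj t _ _ huv := hφ.injective.ne (hz.ne_of_adj t huv)
  dist_eq_of_adj s t _ _ huv := by simpa only [hφ.dist_eq] using hz.dist_eq_of_adj s t huv
  exists_dist_ne := by simpa only [hφ.dist_eq] using hz.exists_dist_ne

lemma div {𝕜 : Type*} [NormedField 𝕜] {z : T → V → 𝕜} (hz : IsNontrivialMotion G z) {c : T → 𝕜}
    (hc : Continuous c) (hc₀ : ∀ t, c t ≠ 0) (hnorm : ∀ s t, ‖c s‖ = ‖c t‖) :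
    IsNontrivialMotion G fun t v => z t v / c t := by
  have hdist : ∀ s t u v, dist (z t u / c t) (z t v / c t) = dist (z t u) (z t v) / ‖c s‖ := by
    intro s t u v
    rw [dist_eq_norm, ← sub_div, norm_div, ← dist_eq_norm, hnorm t s]
  refine ⟨continuous_pi fun v => (hz.continuous_apply v).div hc hc₀,
    fun t u v huv h => hz.ne_of_adj t huv ((div_left_inj' (hc₀ t)).1 h), fun s t u v huv => ?_, ?_⟩
  · rw [hdist s, hdist s, hz.dist_eq_of_adj s t huv]
  · obtain ⟨s, t, u, v, h⟩ := hz.exists_dist_ne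
    refine ⟨s, t, u, v, ?_⟩
    rwa [hdist s, hdist s, Ne, div_left_inj' (norm_ne_zero_iff.2 (hc₀ s))]

end IsNontrivialMotion

theorem exists_isFlexibleLabeling_iff_exists_isNontrivialMotion {G : SimpleGraph V} :
    (∃ lam : Sym2 V → ℝ, IsFlexibleLabeling G lam) ↔
      ∃ z : unitInterval → V → Plane, IsNontrivialMotion G z := by
  constructor
  · rintro ⟨-, -, p, -, f, ⟨hcont, hzero, hf⟩, hnontrivial⟩
    simp only [IsTrivialFlex, PCongruent, not_forall] at hnontrivial
    obtain ⟨t, ht, u, v, huv⟩ := hnontrivial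
    exact ⟨fun t => f t, continuousOn_iff_continuous_domRestrict.1 hcont, fun t => (hf t t.2).1,
      fun s t u v huv => ((hf s s.2).2 huv).symm.trans ((hf t t.2).2 huv),
      ⟨t, ht⟩, 0, u, v, by simpa [hzero] using huv⟩
  · rintro ⟨z, hz⟩
    have hext : ∀ t (ht : t ∈ unitInterval), Set.IccExtend zero_le_one z t = z ⟨t, ht⟩ :=
      fun t ht => Set.IccExtend_of_mem zero_le_one z ht
    refine ⟨Sym2.lift ⟨fun u v => dist (z 0 u) (z 0 v), fun _ _ => dist_comm _ _⟩, ?_, z 0,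
      fun _ _ _ => rfl, Set.IccExtend zero_le_one z,
      ⟨hz.continuous.Icc_extend'.continuousOn, Set.IccExtend_left zero_le_one z, ?_⟩, ?_⟩
    · rintro ⟨u, v⟩ huv
      exact dist_pos.2 (hz.ne_of_adj 0 huv)
    · intro t ht
      rw [hext t ht]
      exact ⟨hz.ne_of_adj _, hz.dist_eq_of_adj _ _⟩
    · intro htrivial
      obtain ⟨s, t, u, v, hne⟩ := hz.exists_dist_ne
      have hcongr : ∀ t : unitInterval, dist (z t u) (z t v) = dist (z 0 u) (z 0 v) := fun t => by
        simpa only [hext t t.2] using htrivial t t.2 u v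
      exact hne ((hcongr s).trans (hcongr t).symm)

end Motion

section Grid

variable {G : SimpleGraph V} {a b : V → ℝ}

/-- The motion of a graph drawn on a grid, `a` and `b` being the column and the row of a vertex:
the rows turn by the angle `π t` relative to the columns. -/
noncomputable def gridMotion (a b : V → ℝ) (t : unitInterval) (v : V) : ℂ :=
  a v + b v * Complex.exp ((π * t : ℝ) * Complex.I)

lemma continuous_gridMotion (a b : V → ℝ) : Continuous (gridMotion a b) := by
  unfold gridMotion
  fun_prop

lemma dist_gridMotion (a b : V → ℝ) (t : unitInterval) (u v : V) :
    dist (gridMotion a b t u) (gridMotion a b t v) =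
      ‖((a u - a v : ℝ) : ℂ) + (b u - b v : ℝ) * Complex.exp ((π * t : ℝ) * Complex.I)‖ := by
  rw [dist_eq_norm, gridMotion, gridMotion]
  push_cast
  ring_nf

lemma dist_gridMotion_of_left_eq {u v : V} (h : a u = a v) (t : unitInterval) :
    dist (gridMotion a b t u) (gridMotion a b t v) = |b u - b v| := by
  rw [dist_gridMotion, h, sub_self, Complex.ofReal_zero, zero_add, norm_mul,
    Complex.norm_exp_ofReal_mul_I, mul_one, Complex.norm_real, Real.norm_eq_abs]

lemma dist_gridMotion_of_right_eq {u v : V} (h : b u = b v) (t : unitInterval) :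
    dist (gridMotion a b t u) (gridMotion a b t v) = |a u - a v| := by
  rw [dist_gridMotion, h, sub_self, Complex.ofReal_zero, zero_mul, add_zero, Complex.norm_real,
    Real.norm_eq_abs]

lemma dist_gridMotion_zero_ne_one {u v : V} (ha : a u ≠ a v) (hb : b u ≠ b v) :
    dist (gridMotion a b 0 u) (gridMotion a b 0 v) ≠
      dist (gridMotion a b 1 u) (gridMotion a b 1 v) := by
  have hzero : dist (gridMotion a b 0 u) (gridMotion a b 0 v) = |(a u - a v) + (b u - b v)| := by
    rw [dist_gridMotion, ← Real.norm_eq_abs, ← Complex.norm_real]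
    simp
  have hone : dist (gridMotion a b 1 u) (gridMotion a b 1 v) = |(a u - a v) - (b u - b v)| := by
    rw [dist_gridMotion, ← Real.norm_eq_abs, ← Complex.norm_real]
    simp [sub_eq_add_neg]
  rw [hzero, hone, Ne, abs_eq_abs]
  rintro (h | h)
  · exact hb (by linarith)
  · exact ha (by linarith)

lemma exists_ne_and_ne_of_exists_ne {α β γ : Type*} {f : α → β} {g : α → γ}
    (hf : ∃ x y, f x ≠ f y) (hg : ∃ x y, g x ≠ g y) : ∃ x y, f x ≠ f y ∧ g x ≠ g y := by
  obtain ⟨x, y, hxy⟩ := hf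
  obtain ⟨x', y', hxy'⟩ := hg
  by_contra! h
  have hfxy' : f x' = f y' := not_imp_comm.1 (h x' y') hxy'
  obtain ⟨w, hw⟩ : ∃ w, f w ≠ f x' := by
    by_contra! hconst
    exact hxy ((hconst x).trans (hconst y).symm)
  exact hxy' ((h w x' hw).symm.trans (h w y' (hfxy' ▸ hw)))

theorem isNontrivialMotion_gridMotion
    (hadj : ∀ ⦃u v⦄, G.Adj u v → (a u = a v ∧ b u ≠ b v) ∨ (a u ≠ a v ∧ b u = b v))
    (ha : ∃ u v, a u ≠ a v) (hb : ∃ u v, b u ≠ b v) : IsNontrivialMotion G (gridMotion a b) where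
  continuous := continuous_gridMotion a b
  ne_of_adj t u v huv := by
    rw [← dist_pos]
    rcases hadj huv with ⟨hau, hbu⟩ | ⟨hau, hbu⟩
    · rw [dist_gridMotion_of_left_eq hau]
      exact abs_sub_pos.2 hbu
    · rw [dist_gridMotion_of_right_eq hbu]
      exact abs_sub_pos.2 hau
  dist_eq_of_adj s t u v huv := by
    rcases hadj huv with ⟨hau, -⟩ | ⟨-, hbu⟩
    · rw [dist_gridMotion_of_left_eq hau, dist_gridMotion_of_left_eq hau]
    · rw [dist_gridMotion_of_right_eq hbu, dist_gridMotion_of_right_eq hbu]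
  exists_dist_ne := by
    obtain ⟨u, v, hau, hbu⟩ := exists_ne_and_ne_of_exists_ne ha hb
    exact ⟨0, 1, u, v, dist_gridMotion_zero_ne_one hau hbu⟩

lemma exists_real_eq_iff_reachable (hV : Cardinal.mk V ≤ Cardinal.continuum)
    (H : SimpleGraph V) : ∃ x : V → ℝ, ∀ u v, x u = x v ↔ H.Reachable u v := by
  have hcard : Cardinal.mk H.ConnectedComponent ≤ Cardinal.continuum :=
    Cardinal.mk_quot_le.trans hV
  obtain ⟨ι⟩ : Nonempty (H.ConnectedComponent ↪ ℝ) := by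
    rw [← Cardinal.lift_mk_le', Cardinal.mk_real, Cardinal.lift_continuum]
    exact Cardinal.lift_le_continuum.2 hcard
  exact ⟨fun v => ι (H.connectedComponentMk v), fun u v => by
    rw [ι.injective.eq_iff, ConnectedComponent.eq]⟩

theorem IsNACColoring.exists_isNontrivialMotion {δ : Sym2 V → Bool} (hδ : IsNACColoring G δ)
    (hV : Cardinal.mk V ≤ Cardinal.continuum) :
    ∃ z : unitInterval → V → ℂ, IsNontrivialMotion G z := by
  obtain ⟨⟨⟨u₁, v₁⟩, h₁, hred⟩, ⟨⟨u₂, v₂⟩, h₂, hblue⟩, hreach⟩ :=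
    isNACColoring_iff_not_reachable.1 hδ
  choose x hx using fun i => exists_real_eq_iff_reachable hV (G.deleteEdges (δ ⁻¹' {i}))
  have hne : ∀ ⦃i u v⦄, G.Adj u v → δ s(u, v) = i → x i u ≠ x i v := by
    rintro _ u v huv rfl h
    exact hreach huv ((hx _ u v).1 h)
  have heq : ∀ ⦃i u v⦄, G.Adj u v → δ s(u, v) ≠ i → x i u = x i v := fun i u v huv h =>
    (hx i u v).2 (Adj.reachable (deleteEdges_adj.2 ⟨huv, h⟩))
  refine ⟨gridMotion (x false) (x true), isNontrivialMotion_gridMotion (fun u v huv => ?_)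
    ⟨u₂, v₂, hne h₂ hblue⟩ ⟨u₁, v₁, hne h₁ hred⟩⟩
  cases hcolor : δ s(u, v)
  · exact .inr ⟨hne huv hcolor, heq huv (by simp [hcolor])⟩
  · exact .inl ⟨heq huv (by simp [hcolor]), hne huv hcolor⟩

end Grid

section Valuation

lemma sub_mem_of_reachable {A σ : Type*} [AddGroup A] [SetLike σ A] [AddSubgroupClass σ A] {S : σ}
    {H : SimpleGraph V} {P : V → A} (hP : ∀ ⦃u v⦄, H.Adj u v → P v - P u ∈ S) {u v : V}
    (huv : H.Reachable u v) : P v - P u ∈ S := by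
  obtain ⟨w⟩ := huv
  induction w with
  | nil => simp only [sub_self, zero_mem]
  | cons hadj _ ih =>
    rw [← sub_add_sub_cancel]
    exact add_mem ih (hP hadj)

/-- The coloring of the edges by a valuation of the edge vectors of `P`: red when it is less
than one. -/
def valuationColoring {K Γ : Type*} [Ring K] [LinearOrderedCommMonoidWithZero Γ]
    (ν : Valuation K Γ) (P : V → K) : Sym2 V → Bool :=
  Sym2.lift ⟨fun u v => decide (ν (P v - P u) < 1), fun u v => by simp only [ν.map_sub_swap]⟩

theorem isNACColoring_valuationColoring {K Γ : Type*} [Ring K]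
    [LinearOrderedCommGroupWithZero Γ] (ν : Valuation K Γ) {G : SimpleGraph V} {P Q : V → K}
    (hPQ : ∀ ⦃u v⦄, G.Adj u v → ν (P v - P u) * ν (Q v - Q u) = 1)
    (hlt : ∃ u v, G.Adj u v ∧ ν (P v - P u) < 1) (hge : ∃ u v, G.Adj u v ∧ 1 ≤ ν (P v - P u)) :
    IsNACColoring G (valuationColoring ν P) := by
  have hred : ∀ u v, valuationColoring ν P s(u, v) = true ↔ ν (P v - P u) < 1 := fun u v =>
    decide_eq_true_iff
  have hblue : ∀ u v, valuationColoring ν P s(u, v) = false ↔ 1 ≤ ν (P v - P u) := fun u v =>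
    decide_eq_false_iff_not.trans not_lt
  obtain ⟨u₁, v₁, h₁, hlt⟩ := hlt
  obtain ⟨u₂, v₂, h₂, hge⟩ := hge
  refine isNACColoring_iff_not_reachable.2 ⟨⟨s(u₁, v₁), h₁, (hred _ _).2 hlt⟩,
    ⟨s(u₂, v₂), h₂, (hblue _ _).2 hge⟩, fun u v huv hreach => ?_⟩
  cases hcolor : valuationColoring ν P s(u, v) <;> rw [hcolor] at hreach
  · have hP : P v - P u ∈ ν.ltAddSubgroup 1 :=
      sub_mem_of_reachable (fun x y hxy => (hred x y).1
        (Bool.eq_true_of_not_eq_false (deleteEdges_adj.1 hxy).2)) hreach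
    exact ((hblue u v).1 hcolor).not_gt hP
  · have hQ : Q v - Q u ∈ ν.integer := by
      refine sub_mem_of_reachable (fun x y hxy => ?_) hreach
      have hPxy : 1 ≤ ν (P y - P x) := (hblue x y).1
        (Bool.eq_false_of_not_eq_true (deleteEdges_adj.1 hxy).2)
      rw [Valuation.mem_integer_iff, ← hPQ hxy.1]
      exact le_mul_of_one_le_left' hPxy
    have hPuv : ν (P v - P u) < 1 := (hred u v).1 hcolor
    exact ((mul_le_of_le_one_right' hQ).trans_lt hPuv).ne (hPQ huv)

lemma isTrivialOn_of_le_one {k K Γ : Type*} [Field k] [Ring K] [Algebra k K]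
    [LinearOrderedCommGroupWithZero Γ] {ν : Valuation K Γ}
    (hν : ∀ c : k, ν (algebraMap k K c) ≤ 1) : ν.IsTrivialOn k where
  eq_one c hc := by
    refine (hν c).antisymm ?_
    calc 1 = ν (algebraMap k K c) * ν (algebraMap k K c⁻¹) := by
          rw [← map_mul, ← map_mul, mul_inv_cancel₀ hc, map_one, map_one]
      _ ≤ ν (algebraMap k K c) := mul_le_of_le_one_right' (hν c⁻¹)

lemma exists_valuationSubring_valuation_lt_one {k K : Type*} [Field k] [Field K] [Algebra k K]
    {g : K} (hg : Transcendental k g) :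
    ∃ A : ValuationSubring K, A.valuation.IsTrivialOn k ∧ A.valuation g < 1 := by
  have hinv : g⁻¹ ∉ (integralClosure k K).toSubring := fun h =>
    hg (IsAlgebraic.inv_iff.1 (IsIntegral.isAlgebraic h))
  obtain ⟨A, hle, hA⟩ := Subring.exists_le_valuationSubring_of_isIntegrallyClosedIn hinv
  refine ⟨A, isTrivialOn_of_le_one fun c => (A.valuation_le_one_iff _).2
    (hle (algebraMap_mem (integralClosure k K) c)), ?_⟩
  rw [← A.valuation_le_one_iff, map_inv₀, not_le] at hA
  contrapose! hA
  exact inv_le_one_of_one_le₀ hA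

end Valuation

section Ultrapower

lemma exists_ultrafilter_tendsto_cofinite {α β : Type*} {g : α → β} (hg : (Set.range g).Infinite) :
    ∃ U : Ultrafilter α, Tendsto g U cofinite := by
  have : (comap g cofinite).NeBot :=
    comap_neBot_iff_frequently.2 fun h => hg (h.subset fun y hy hc => hc hy)
  exact ⟨Ultrafilter.of (comap g cofinite), tendsto_iff_comap.2 (Ultrafilter.of_le _)⟩

/-- The algebra of germs along a filter, with the pointwise scalar multiplication that germs already
carry. -/
instance germAlgebra {α R A : Type*} (l : Filter α) [CommSemiring R] [Semiring A] [Algebra R A] :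
    Algebra R (l.Germ A) :=
  Algebra.ofModule
    (fun c x y => Germ.inductionOn₂ x y fun f g =>
      congrArg ((↑) : (α → A) → l.Germ A) (smul_mul_assoc c f g))
    (fun c x y => Germ.inductionOn₂ x y fun f g =>
      congrArg ((↑) : (α → A) → l.Germ A) (mul_smul_comm c f g))

lemma aeval_germ_coe {α R A : Type*} (l : Filter α) [CommSemiring R] [Semiring A] [Algebra R A]
    (p : Polynomial R) (f : α → A) :
    Polynomial.aeval (f : l.Germ A) p = ((fun t => Polynomial.aeval (f t) p : α → A) :) := by
  let coeAlgHom : (α → A) →ₐ[R] l.Germ A :=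
    AlgHom.ofLinearMap ⟨⟨(↑), fun _ _ => rfl⟩, fun _ _ => rfl⟩ rfl fun _ _ => rfl
  calc Polynomial.aeval (f : l.Germ A) p = coeAlgHom (Polynomial.aeval f p) :=
        Polynomial.aeval_algHom_apply coeAlgHom f p
    _ = ((fun t => Polynomial.aeval (f t) p : α → A) :) := by
        refine congrArg ((↑) : (α → A) → l.Germ A) (funext fun t => ?_)
        exact (Polynomial.aeval_algHom_apply (Pi.evalAlgHom R (fun _ => A) t) f p).symm

lemma transcendental_germ_of_tendsto_cofinite {α k : Type*} [Field k] {U : Ultrafilter α}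
    {g : α → k} (hg : Tendsto g U cofinite) : Transcendental k (g : (U : Filter α).Germ k) := by
  rw [transcendental_iff]
  intro p hp
  by_contra hp₀
  rw [aeval_germ_coe] at hp
  have hroot : ∀ᶠ t in (U : Filter α), p.IsRoot (g t) := Germ.coe_eq.1 hp
  have hfin : {x | p.IsRoot x}.Finite := p.finite_setOfPred_isRoot hp₀
  obtain ⟨t, ht, ht'⟩ := (hroot.and (hg hfin.compl_mem_cofinite)).exists
  exact ht' ht

end Ultrapower

section Extraction

lemma germ_mul_germ_conj {α : Type*} {l : Filter α} {f : α → ℂ} {r : ℝ} (hf : ∀ t, ‖f t‖ = r) :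
    (f : l.Germ ℂ) * ((fun t => conj (f t) : α → ℂ) : l.Germ ℂ) =
      algebraMap ℂ (l.Germ ℂ) ((r : ℂ) ^ 2) := by
  rw [Algebra.algebraMap_eq_smul_one]
  refine congrArg ((↑) : (α → ℂ) → l.Germ ℂ) (funext fun t => ?_)
  simp [Complex.mul_conj', hf]

namespace IsNontrivialMotion

variable {T : Type*} [TopologicalSpace T] {G : SimpleGraph V}

lemma exists_adj_sub_ne {E : Type*} [NormedAddCommGroup E] {z : T → V → E}
    (hz : IsNontrivialMotion G z) (hG : G.Preconnected) :
    ∃ u v, G.Adj u v ∧ ∃ s t, z s v - z s u ≠ z t v - z t u := by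
  by_contra! hconst
  obtain ⟨s, t, u, v, hne⟩ := hz.exists_dist_ne
  have hmem : (z s u - z t u) - (z s v - z t v) ∈ (⊥ : AddSubgroup E) := by
    refine sub_mem_of_reachable (P := fun x => z s x - z t x) (fun x y hxy => ?_) (hG v u)
    rw [AddSubgroup.mem_bot, sub_sub_sub_comm, hconst x y hxy s t, sub_self]
  rw [AddSubgroup.mem_bot, sub_sub_sub_comm, sub_eq_zero] at hmem
  exact hne (by rw [dist_eq_norm, dist_eq_norm, hmem])

lemma exists_isNACColoring_of_edge_eq_one [PreconnectedSpace T] {w : T → V → ℂ}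
    (hw : IsNontrivialMotion G w) (hG : G.Preconnected) {a b : V} (hab : G.Adj a b)
    (hwab : ∀ t, w t b - w t a = 1) : ∃ δ : Sym2 V → Bool, IsNACColoring G δ := by
  obtain ⟨u, v, huv, s₀, t₀, hne⟩ := hw.exists_adj_sub_ne hG
  have hrange : (Set.range fun t => w t v - w t u).Infinite :=
    (isPreconnected_range ((hw.continuous_apply v).sub
      (hw.continuous_apply u))).infinite_of_nontrivial ⟨_, ⟨s₀, rfl⟩, _, ⟨t₀, rfl⟩, hne⟩
  obtain ⟨U, hU⟩ := exists_ultrafilter_tendsto_cofinite hrange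
  obtain ⟨A, hA, hlt⟩ :=
    exists_valuationSubring_valuation_lt_one (transcendental_germ_of_tendsto_cofinite hU)
  let P : V → (U : Filter T).Germ ℂ := fun x => ((fun t => w t x : T → ℂ) :)
  let Q : V → (U : Filter T).Germ ℂ := fun x => ((fun t => conj (w t x) : T → ℂ) :)
  have hPQ : ∀ ⦃x y⦄, G.Adj x y → (P y - P x) * (Q y - Q x) =
      algebraMap ℂ ((U : Filter T).Germ ℂ) ((dist (w s₀ y) (w s₀ x) : ℂ) ^ 2) := by
    intro x y hxy
    rw [← germ_mul_germ_conj (f := fun t => w t y - w t x) fun t =>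
      (dist_eq_norm _ _).symm.trans (hw.dist_eq_of_adj t s₀ hxy.symm)]
    simp only [map_sub]
    rfl
  have hPab : P b - P a = 1 := congrArg ((↑) : (T → ℂ) → (U : Filter T).Germ ℂ) (funext hwab)
  refine ⟨_, isNACColoring_valuationColoring A.valuation (P := P) (Q := Q) (fun x y hxy => ?_)
    ⟨u, v, huv, hlt⟩ ⟨a, b, hab, by rw [hPab, map_one]⟩⟩
  have hdist : (dist (w s₀ y) (w s₀ x) : ℂ) ≠ 0 :=
    Complex.ofReal_ne_zero.2 (dist_ne_zero.2 (hw.ne_of_adj s₀ hxy.symm))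
  rw [← map_mul, hPQ hxy]
  exact hA.eq_one _ (pow_ne_zero 2 hdist)

theorem exists_isNACColoring [PreconnectedSpace T] {z : T → V → ℂ} (hz : IsNontrivialMotion G z)
    (hG : G.Preconnected) : ∃ δ : Sym2 V → Bool, IsNACColoring G δ := by
  obtain ⟨a, b, hab, -⟩ := hz.exists_adj_sub_ne hG
  have hne : ∀ t, z t b - z t a ≠ 0 := fun t => sub_ne_zero.2 (hz.ne_of_adj t hab).symm
  have hnorm : ∀ s t, ‖z s b - z s a‖ = ‖z t b - z t a‖ := fun s t => by
    simpa only [dist_eq_norm] using hz.dist_eq_of_adj s t hab.symm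
  have hw : IsNontrivialMotion G fun t x => z t x / (z t b - z t a) :=
    hz.div ((hz.continuous_apply b).sub (hz.continuous_apply a)) hne hnorm
  exact hw.exists_isNACColoring_of_edge_eq_one hG hab fun t => by rw [← sub_div, div_self (hne t)]

end IsNontrivialMotion

end Extraction

theorem flexible_labeling_iff_NAC_coloring_general (G : SimpleGraph V) (hG : G.Preconnected)
    (hV : Cardinal.mk V ≤ Cardinal.continuum) :
    (∃ lam : Sym2 V → ℝ, IsFlexibleLabeling G lam) ↔
      ∃ δ : Sym2 V → Bool, IsNACColoring G δ := by
  rw [exists_isFlexibleLabeling_iff_exists_isNontrivialMotion]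
  let φ : ℂ ≃ₗᵢ[ℝ] Plane := Complex.orthonormalBasisOneI.repr
  constructor
  · rintro ⟨z, hz⟩
    exact (hz.isometry_comp φ.symm.isometry).exists_isNACColoring hG
  · rintro ⟨δ, hδ⟩
    obtain ⟨z, hz⟩ := hδ.exists_isNontrivialMotion hV
    exact ⟨_, hz.isometry_comp φ.isometry⟩

/-- A connected non-trivial graph has a flexible labeling if and only if it has a
NAC-coloring. -/
theorem flexible_labeling_iff_NAC_coloring [Fintype V] (G : SimpleGraph V)
    (hconn : G.Connected) (hne : G.edgeSet.Nonempty) :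
    (∃ lam : Sym2 V → ℝ, IsFlexibleLabeling G lam) ↔
      ∃ δ : Sym2 V → Bool, IsNACColoring G δ := by
  exact flexible_labeling_iff_NAC_coloring_general G hconn.preconnected
    ((Cardinal.lt_aleph0_of_finite V).le.trans Cardinal.aleph0_le_continuum)
end

section
/- Let G be a graph and let U(G) denote the set of all pairs {u,v} ⊂ V_G such that uv ∉ E_G and there exists a path from u to v in G which is monochromatic for every NAC-coloring δ of G. Let G' = (V_G, E_G ∪ U(G)). Then G is movable if and only if G' is movable. -/
open SimpleGraph Real

variable {V : Type*}

/-- The pairs `{u, v}` of non-adjacent vertices joined by a path that is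
monochromatic for every NAC-coloring of `G`. -/
def UPairs (G : SimpleGraph V) : Set (Sym2 V) :=
  {p | ∃ u v : V, p = s(u, v) ∧ u ≠ v ∧ ¬ G.Adj u v ∧
    ∃ w : G.Walk u v, w.IsPath ∧
      ∀ δ : Sym2 V → Bool, IsNACColoring G δ →
        (∀ e ∈ w.edges, δ e = true) ∨ (∀ e ∈ w.edges, δ e = false)}

/-!
Identify the plane with `ℂ` and view a flex of `(G, p)` over the parameter space `T = [0, 1]` as a
family of elements `z v` of the `ℂ`-algebra `T → ℂ`. On an edge `uv` the product of `z u - z v` and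
its conjugate is a nonzero constant, so every valuation trivial on `ℂ` gives the two factors inverse
values. Coloring an edge red if the value of `z u - z v` exceeds a given threshold and blue
otherwise is a NAC-coloring as soon as both colors occur: the terms `z u - z v` sum to zero around a
cycle, so exactly one red edge is impossible, and the conjugate terms exclude exactly one blue edge.

If the ratio of two edge vectors takes infinitely many values, it is transcendental over `ℂ`. It
stays so in the residue field at some prime ideal of `T → ℂ`, where some valuation trivial on `ℂ` is
greater than `1` on it, and a threshold NAC-coloring separates the two edges. Hence edges that no
NAC-coloring separates have a ratio with finitely many values, which is constant because `T` is
connected. So the edges of a path monochromatic for every NAC-coloring rotate together, and its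
endpoints keep their distance.
-/

section Walk

variable {G : SimpleGraph V} {A : Type*} [AddCommGroup A]

lemma walk_sum_darts_sub (h : V → A) {u v : V} (w : G.Walk u v) :
    (w.darts.map fun d => h d.fst - h d.snd).sum = h u - h v := by
  induction w with
  | nil => simp
  | cons _ _ ih => simp [ih]

lemma list_sum_notMem_of_countP_eq_one (S : AddSubgroup A) [DecidablePred (· ∈ S)] {l : List A}
    (hl : l.countP (· ∉ S) = 1) : l.sum ∉ S := by
  induction l with
  | nil => simp at hl
  | cons a l ih =>
    rw [List.sum_cons]
    by_cases ha : a ∈ S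
    · rw [S.add_mem_cancel_left ha]
      exact ih (by simpa [ha] using hl)
    · have hl₀ : ∀ b ∈ l, b ∈ S := by simpa [ha] using hl
      rwa [S.add_mem_cancel_right (list_sum_mem hl₀)]

lemma countP_edges_ne_one_of_iff_sub_notMem (S : AddSubgroup A) (h : V → A) (P : Sym2 V → Bool)
    (hP : ∀ ⦃u v⦄, G.Adj u v → (P s(u, v) = true ↔ h u - h v ∉ S)) {v : V} (c : G.Walk v v) :
    c.edges.countP P ≠ 1 := by
  classical
  intro hc
  have hcount : (c.darts.map fun d => h d.fst - h d.snd).countP (· ∉ S) = 1 := by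
    rw [← hc, Walk.edges, List.countP_map, List.countP_map]
    exact List.countP_congr fun d _ => decide_eq_true_iff.trans (hP d.adj).symm
  refine list_sum_notMem_of_countP_eq_one S hcount ?_
  rw [walk_sum_darts_sub, sub_self]
  exact S.zero_mem

end Walk

section Coloring

variable {G : SimpleGraph V}

lemma isNACColoring_of_countP_ne_one {δ : Sym2 V → Bool} (htrue : ∃ e ∈ G.edgeSet, δ e = true)
    (hfalse : ∃ e ∈ G.edgeSet, δ e = false)
    (hcycle : ∀ ⦃v : V⦄ (c : G.Walk v v), c.IsCycle →
      c.edges.countP (fun e => δ e) ≠ 1 ∧ c.edges.countP (fun e => !(δ e)) ≠ 1) :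
    IsNACColoring G δ := by
  refine ⟨htrue, hfalse, fun v c hc => ?_⟩
  obtain ⟨hred, hblue⟩ := hcycle c hc
  rw [← List.countP_eq_length_filter, ← List.countP_eq_length_filter]
  rcases Nat.eq_zero_or_pos (c.edges.countP fun e => δ e) with h | h
  · exact .inr <| .inl fun e he => by simpa using List.countP_eq_zero.1 h e he
  rcases Nat.eq_zero_or_pos (c.edges.countP fun e => !(δ e)) with h' | h'
  · exact .inl fun e he => by simpa using List.countP_eq_zero.1 h' e he
  · exact .inr <| .inr ⟨by omega, by omega⟩

variable {A Γ : Type*} [Ring A] [LinearOrderedCommGroupWithZero Γ]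

/-- The coloring induced by a valuation `ν`, a family `x` of ring elements indexed by the vertices,
and a threshold `γ`: the pair `uv` is red (`true`) if `γ < ν (x u - x v)`, and blue otherwise. -/
def thresholdColoring (ν : Valuation A Γ) (x : V → A) (γ : Γ) : Sym2 V → Bool :=
  Sym2.lift ⟨fun u v => decide (γ < ν (x u - x v)), fun u v => by simp only [ν.map_sub_swap (x u)]⟩

variable {ν : Valuation A Γ} {x y : V → A} {γ : Γ}

lemma thresholdColoring_eq_true_iff {u v : V} :
    thresholdColoring ν x γ s(u, v) = true ↔ γ < ν (x u - x v) := by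
  simp [thresholdColoring]

lemma thresholdColoring_eq_false_iff {u v : V} :
    thresholdColoring ν x γ s(u, v) = false ↔ ν (x u - x v) ≤ γ := by
  simp [thresholdColoring]

lemma thresholdColoring_eq_false_iff_inv_le
    (hxy : ∀ ⦃u v⦄, G.Adj u v → ν (x u - x v) * ν (y u - y v) = 1) (hγ : γ ≠ 0)
    {u v : V} (huv : G.Adj u v) :
    thresholdColoring ν x γ s(u, v) = false ↔ γ⁻¹ ≤ ν (y u - y v) := by
  have hx : ν (x u - x v) ≠ 0 := left_ne_zero_of_mul_eq_one (hxy huv)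
  rw [thresholdColoring_eq_false_iff, eq_inv_of_mul_eq_one_right (hxy huv),
    inv_le_inv₀ (zero_lt_iff.2 hγ) (zero_lt_iff.2 hx)]

lemma isNACColoring_thresholdColoring
    (hxy : ∀ ⦃u v⦄, G.Adj u v → ν (x u - x v) * ν (y u - y v) = 1)
    {a b c d : V} (hab : G.Adj a b) (hcd : G.Adj c d)
    (hlow : ν (x a - x b) ≤ γ) (hhigh : γ < ν (x c - x d)) :
    IsNACColoring G (thresholdColoring ν x γ) := by
  have hγ : γ ≠ 0 :=
    ((zero_lt_iff.2 (left_ne_zero_of_mul_eq_one (hxy hab))).trans_le hlow).ne'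
  refine isNACColoring_of_countP_ne_one ⟨s(c, d), hcd, thresholdColoring_eq_true_iff.2 hhigh⟩
    ⟨s(a, b), hab, thresholdColoring_eq_false_iff.2 hlow⟩ fun v w _ => ⟨?_, ?_⟩
  · refine countP_edges_ne_one_of_iff_sub_notMem (ν.leAddSubgroup γ) x _ (fun u v _ => ?_) w
    rw [thresholdColoring_eq_true_iff, Valuation.mem_leAddSubgroup_iff, not_le]
  · refine countP_edges_ne_one_of_iff_sub_notMem
      (ν.ltAddSubgroup (Units.mk0 γ⁻¹ (inv_ne_zero hγ))) y _ (fun u v huv => ?_) w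
    rw [Bool.not_eq_true', thresholdColoring_eq_false_iff_inv_le hxy hγ huv,
      Valuation.mem_ltAddSubgroup_iff, Units.val_mk0, not_lt]

end Coloring

section Valuation

universe u

variable {k : Type*} [Field k]

lemma exists_valuationSubring_isTrivialOn_one_lt {K : Type*} [Field K] [Algebra k K] {x : K}
    (hx : ¬ IsIntegral k x) :
    ∃ O : ValuationSubring K, O.valuation.IsTrivialOn k ∧ 1 < O.valuation x := by
  obtain ⟨O, hkO, hxO⟩ := Subring.exists_le_valuationSubring_of_isIntegrallyClosedIn
    (R := (integralClosure k K).toSubring) hx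
  have hle : ∀ c : k, O.valuation (algebraMap k K c) ≤ 1 := fun c =>
    (O.valuation_le_one_iff _).2 (hkO (algebraMap_mem (integralClosure k K) c))
  refine ⟨O, ⟨fun c hc => (hle c).antisymm ?_⟩, by rwa [← not_le, O.valuation_le_one_iff]⟩
  have hpos : 0 < O.valuation (algebraMap k K c) := zero_lt_iff.2 (by simpa using hc)
  simpa [inv_le_one₀ hpos] using hle c⁻¹

lemma exists_prime_transcendental_residueField {A : Type*} [CommRing A] [Algebra k A] {x : A}
    (hx : Transcendental k x) :
    ∃ (P : Ideal A) (_ : P.IsPrime), Transcendental k (algebraMap A P.ResidueField x) := by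
  let S : Submonoid A := (nonZeroDivisors (Polynomial k)).map (Polynomial.aeval x)
  have hS : Disjoint ((⊥ : Ideal A) : Set A) S := by
    rw [Set.disjoint_left]
    rintro _ h₀ ⟨p, hp, rfl⟩
    exact nonZeroDivisors.ne_zero hp (transcendental_iff.1 hx p h₀)
  obtain ⟨P, hP, -, hPS⟩ := Ideal.exists_le_prime_disjoint ⊥ S hS
  refine ⟨P, hP, transcendental_iff.2 fun p hp => of_not_not fun hp₀ => ?_⟩
  rw [Polynomial.aeval_algebraMap_apply, Ideal.algebraMap_residueField_eq_zero] at hp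
  exact Set.disjoint_left.1 hPS hp ⟨p, mem_nonZeroDivisors_of_ne_zero hp₀, rfl⟩

lemma exists_valuation_isTrivialOn_one_lt {A : Type u} [CommRing A] [Algebra k A] {x : A}
    (hx : Transcendental k x) :
    ∃ (Γ : Type u) (_ : LinearOrderedCommGroupWithZero Γ) (ν : Valuation A Γ),
      ν.IsTrivialOn k ∧ 1 < ν x := by
  obtain ⟨P, _, hP⟩ := exists_prime_transcendental_residueField hx
  obtain ⟨O, hO, hxO⟩ :=
    exists_valuationSubring_isTrivialOn_one_lt fun h => hP h.isAlgebraic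
  refine ⟨_, _, O.valuation.comap (algebraMap A P.ResidueField), ⟨fun c hc => ?_⟩, hxO⟩
  rw [Valuation.comap_apply, ← IsScalarTower.algebraMap_apply]
  exact hO.eq_one c hc

lemma transcendental_of_infinite_range {T : Type*} {r : T → k} (hr : (Set.range r).Infinite) :
    Transcendental k r := by
  refine transcendental_iff.2 fun p hp => p.eq_zero_of_infinite_isRoot (hr.mono ?_)
  rintro _ ⟨t, rfl⟩
  simpa [Polynomial.aeval_pi] using congrFun hp t

end Valuation

section Motion

variable {G : SimpleGraph V} {T : Type*}

/-- A motion of `G` in the complex plane with parameter space `T`: a family of placements along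
which every edge keeps its length. The placement at `t` is `fun v => z v t`; the vertex is the first
argument so that `z v` is an element of the `ℂ`-algebra `T → ℂ`. -/
def IsMotion (G : SimpleGraph V) (z : V → T → ℂ) : Prop :=
  ∀ ⦃u v : V⦄, G.Adj u v → ∃ r > 0, ∀ t, ‖z u t - z v t‖ = r

namespace IsMotion

variable {z : V → T → ℂ} {a b c d u v : V}

lemma sub_ne_zero (hz : IsMotion G z) (huv : G.Adj u v) (t : T) : z u t - z v t ≠ 0 := by
  obtain ⟨r, hr, hlen⟩ := hz huv
  exact norm_pos_iff.1 (hr.trans_eq (hlen t).symm)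

lemma div_mul_cancel (hz : IsMotion G z) (hab : G.Adj a b) (x : T → ℂ) :
    x / (z a - z b) * (z a - z b) = x :=
  funext fun t => div_mul_cancel₀ (x t) (hz.sub_ne_zero hab t)

lemma valuation_mul_valuation_star {Γ : Type*} [LinearOrderedCommGroupWithZero Γ]
    (hz : IsMotion G z) (ν : Valuation (T → ℂ) Γ) [ν.IsTrivialOn ℂ] (huv : G.Adj u v) :
    ν (z u - z v) * ν (star (z u) - star (z v)) = 1 := by
  obtain ⟨r, hr, hlen⟩ := hz huv
  have hmul : (z u - z v) * star (z u - z v) = algebraMap ℂ (T → ℂ) (r ^ 2) := by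
    funext t
    simpa [hlen t] using Complex.mul_conj' (z u t - z v t)
  rw [← star_sub, ← map_mul, hmul]
  exact Valuation.IsTrivialOn.eq_one _ (by exact_mod_cast (pow_pos hr 2).ne')

theorem finite_range_ratio (hz : IsMotion G z) (hab : G.Adj a b) (hcd : G.Adj c d)
    (hδ : ∀ δ, IsNACColoring G δ → δ s(a, b) = δ s(c, d)) :
    (Set.range ((z c - z d) / (z a - z b))).Finite := by
  by_contra hinf
  obtain ⟨Γ, _, ν, _, hν⟩ :=
    exists_valuation_isTrivialOn_one_lt (transcendental_of_infinite_range hinf)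
  have hxy : ∀ ⦃u v⦄, G.Adj u v → ν (z u - z v) * ν (star (z u) - star (z v)) = 1 :=
    fun u v => hz.valuation_mul_valuation_star ν
  have hlt : ν (z a - z b) < ν (z c - z d) := by
    rw [← hz.div_mul_cancel hab (z c - z d), map_mul]
    exact lt_mul_of_one_lt_left (zero_lt_iff.2 (left_ne_zero_of_mul_eq_one (hxy hab))) hν
  have hsame := hδ _ (isNACColoring_thresholdColoring hxy hab hcd le_rfl hlt)
  rw [thresholdColoring_eq_false_iff.2 le_rfl, thresholdColoring_eq_true_iff.2 hlt] at hsame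
  exact Bool.false_ne_true hsame

variable [TopologicalSpace T] [PreconnectedSpace T]

lemma sub_mem_span_of_adj (hz : IsMotion G z) (hcont : ∀ v, Continuous (z v)) (hab : G.Adj a b)
    (hcd : G.Adj c d) (hδ : ∀ δ, IsNACColoring G δ → δ s(a, b) = δ s(c, d)) :
    z c - z d ∈ ℂ ∙ (z a - z b) := by
  have hratio : Continuous ((z c - z d) / (z a - z b)) :=
    ((hcont c).sub (hcont d)).div ((hcont a).sub (hcont b)) (hz.sub_ne_zero hab)
  have hsub : (Set.range ((z c - z d) / (z a - z b))).Subsingleton := by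
    rw [← Set.not_nontrivial_iff]
    exact fun h => (isPreconnected_range hratio).infinite_of_nontrivial h
      (hz.finite_range_ratio hab hcd hδ)
  obtain ⟨q, hq⟩ : ∃ q : ℂ, ∀ t, ((z c - z d) / (z a - z b)) t = q := by
    rcases hsub.eq_empty_or_singleton with h | ⟨q, hq⟩
    · exact ⟨0, fun t => absurd (Set.mem_range_self t) (h ▸ Set.notMem_empty _)⟩
    · exact ⟨q, fun t => Set.mem_singleton_iff.1 (hq ▸ Set.mem_range_self t)⟩
  refine Submodule.mem_span_singleton.2 ⟨q, ?_⟩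
  rw [← hz.div_mul_cancel hab (z c - z d)]
  funext t
  simp only [Pi.smul_apply, Pi.mul_apply, smul_eq_mul, hq t]

lemma sub_mem_span_of_walk (hz : IsMotion G z) (hcont : ∀ v, Continuous (z v)) (hab : G.Adj a b)
    (w : G.Walk u v) (hw : ∀ e ∈ w.edges, ∀ δ, IsNACColoring G δ → δ s(a, b) = δ e) :
    z u - z v ∈ ℂ ∙ (z a - z b) := by
  rw [← walk_sum_darts_sub z w]
  refine list_sum_mem fun x hx => ?_
  obtain ⟨d, hd, rfl⟩ := List.mem_map.1 hx
  exact hz.sub_mem_span_of_adj hcont hab d.adj (hw _ (List.mem_map_of_mem hd))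

theorem norm_sub_eq_of_monochromatic (hz : IsMotion G z) (hcont : ∀ v, Continuous (z v))
    (w : G.Walk u v)
    (hw : ∀ δ, IsNACColoring G δ → (∀ e ∈ w.edges, δ e = true) ∨ (∀ e ∈ w.edges, δ e = false))
    (s t : T) : ‖z u s - z v s‖ = ‖z u t - z v t‖ := by
  have hsame : ∀ e ∈ w.edges, ∀ e' ∈ w.edges, ∀ δ, IsNACColoring G δ → δ e = δ e' :=
    fun e he e' he' δ hδ => (hw δ hδ).elim
      (fun h => (h e he).trans (h e' he').symm) (fun h => (h e he).trans (h e' he').symm)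
  cases w with
  | nil => simp
  | @cons _ b _ hub w' =>
    obtain ⟨q, hq⟩ := Submodule.mem_span_singleton.1 <|
      hz.sub_mem_span_of_walk hcont hub (.cons hub w') (hsame _ (by simp))
    obtain ⟨r, -, hlen⟩ := hz hub
    have hnorm : ∀ t, ‖z u t - z v t‖ = ‖q‖ * r := fun t => by
      rw [← hlen t, ← norm_mul]
      exact congrArg norm (congrFun hq t).symm
    rw [hnorm s, hnorm t]

end IsMotion

end Motion

section Flex

variable {G H : SimpleGraph V} {p : V → Plane} {f : ℝ → V → Plane}

/-- A path of placements in the Euclidean plane, restricted to the unit interval and transported to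
`ℂ` by the isometry that sends the standard basis to `1, I`. -/
noncomputable def complexMotion (f : ℝ → V → Plane) (v : V) (t : unitInterval) : ℂ :=
  Complex.orthonormalBasisOneI.repr.symm (f t v)

lemma norm_complexMotion_sub (f : ℝ → V → Plane) (u v : V) (t : unitInterval) :
    ‖complexMotion f u t - complexMotion f v t‖ = dist (f t u) (f t v) := by
  rw [← dist_eq_norm]
  exact Complex.orthonormalBasisOneI.repr.symm.dist_map _ _

lemma IsFlex.continuous_complexMotion (hf : IsFlex G p f) (v : V) :
    Continuous (complexMotion f v) :=
  Complex.orthonormalBasisOneI.repr.symm.continuous.comp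
    ((continuous_apply v).comp hf.1.domRestrict)

lemma IsFlex.isPlacement (hf : IsFlex G p f) : IsPlacement G p :=
  hf.2.1 ▸ (hf.2.2 0 unitInterval.zero_mem).1

lemma IsFlex.isMotion_complexMotion (hf : IsFlex G p f) : IsMotion G (complexMotion f) :=
  fun u v huv => ⟨dist (p u) (p v), dist_pos.2 (hf.isPlacement huv), fun t => by
    rw [norm_complexMotion_sub, (hf.2.2 t t.2).2 huv]⟩

lemma IsFlex.dist_eq_of_mem_UPairs (hf : IsFlex G p f) {u v : V} (huv : s(u, v) ∈ UPairs G)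
    {t : ℝ} (ht : t ∈ Set.Icc (0 : ℝ) 1) : dist (p u) (p v) = dist (f t u) (f t v) := by
  obtain ⟨a, b, hab, -, -, w, -, hw⟩ := huv
  have hdist := hf.isMotion_complexMotion.norm_sub_eq_of_monochromatic
    hf.continuous_complexMotion w hw 0 ⟨t, ht⟩
  simp only [norm_complexMotion_sub, Set.Icc.coe_zero, hf.2.1] at hdist
  rcases Sym2.eq_iff.1 hab with ⟨rfl, rfl⟩ | ⟨rfl, rfl⟩
  · exact hdist
  · rwa [_root_.dist_comm, _root_.dist_comm (f t _)]

lemma IsFlex.frameworkEquiv_addUPairs (hf : IsFlex G p f) {t : ℝ} (ht : t ∈ Set.Icc (0 : ℝ) 1) :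
    FrameworkEquiv (fromEdgeSet (G.edgeSet ∪ UPairs G)) p (f t) := fun _ _ huv =>
  ((fromEdgeSet_adj _).1 huv).1.elim (fun h => (hf.2.2 t ht).2 h)
    (fun h => hf.dist_eq_of_mem_UPairs h ht)

lemma FrameworkEquiv.isPlacement_iff {q : V → Plane} (h : FrameworkEquiv G p q) :
    IsPlacement G p ↔ IsPlacement G q :=
  forall₃_congr fun u v huv => by rw [← dist_ne_zero, h huv, dist_ne_zero]

lemma IsFlex.of_frameworkEquiv (hf : IsFlex G p f)
    (hequiv : ∀ t ∈ Set.Icc (0 : ℝ) 1, FrameworkEquiv H p (f t))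
    (hinj : ∃ t ∈ Set.Icc (0 : ℝ) 1, Function.Injective (f t)) : IsFlex H p f := by
  obtain ⟨t₀, ht₀, hinj₀⟩ := hinj
  have hp : IsPlacement H p :=
    (hequiv t₀ ht₀).isPlacement_iff.2 fun u v huv => hinj₀.ne huv.ne
  exact ⟨hf.1, hf.2.1, fun t ht => ⟨(hequiv t ht).isPlacement_iff.1 hp, hequiv t ht⟩⟩

lemma IsFlex.mono (hGH : G ≤ H) (hf : IsFlex H p f) : IsFlex G p f :=
  ⟨hf.1, hf.2.1, fun t ht => ⟨fun _ _ h => (hf.2.2 t ht).1 (hGH h),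
    fun _ _ h => (hf.2.2 t ht).2 (hGH h)⟩⟩

end Flex

lemma movable_iff_exists_isFlex {G : SimpleGraph V} :
    Movable G ↔ ∃ (p : V → Plane) (f : ℝ → V → Plane), IsFlex G p f ∧ ¬ IsTrivialFlex p f ∧
      {t ∈ Set.Icc (0 : ℝ) 1 | ¬ Function.Injective (f t)}.Finite := by
  constructor
  · rintro ⟨-, -, p, -, f, hf⟩
    exact ⟨p, f, hf⟩
  · rintro ⟨p, f, hf, hrest⟩
    let lam : Sym2 V → ℝ := Sym2.lift ⟨fun u v => dist (p u) (p v), fun _ _ => dist_comm _ _⟩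
    have hpos : ∀ e ∈ G.edgeSet, 0 < lam e :=
      Sym2.ind fun _ _ huv => dist_pos.2 (hf.isPlacement huv)
    exact ⟨lam, hpos, p, fun _ _ _ => rfl, f, hf, hrest⟩

theorem movable_iff_addUPairs_movable_general (G : SimpleGraph V) :
    Movable G ↔ Movable (fromEdgeSet (G.edgeSet ∪ UPairs G)) := by
  have hle : G ≤ fromEdgeSet (G.edgeSet ∪ UPairs G) :=
    fun _ _ h => (fromEdgeSet_adj _).2 ⟨.inl h, h.ne⟩
  simp only [movable_iff_exists_isFlex]
  constructor
  · rintro ⟨p, f, hf, hnontrivial, hfinite⟩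
    obtain ⟨t, ht, hnotMem⟩ := (Set.Icc_infinite (zero_lt_one' ℝ)).exists_notMem_finite hfinite
    have hinj : Function.Injective (f t) := of_not_not fun h => hnotMem ⟨ht, h⟩
    exact ⟨p, f, hf.of_frameworkEquiv (fun _ => hf.frameworkEquiv_addUPairs) ⟨t, ht, hinj⟩,
      hnontrivial, hfinite⟩
  · rintro ⟨p, f, hf, hrest⟩
    exact ⟨p, f, hf.mono hle, hrest⟩

/-- A graph is movable iff the graph obtained by adding all pairs in `U(G)` as
edges is movable. -/
theorem movable_iff_addUPairs_movable [Fintype V] (G : SimpleGraph V) :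
    Movable G ↔ Movable (SimpleGraph.fromEdgeSet (G.edgeSet ∪ UPairs G)) :=
  movable_iff_addUPairs_movable_general G
end
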